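/- arXiv:2412.20893 — 2 statements merged into one kernel-verified Lean document; each statement's English description precedes it below -/
import Mathlib

section
/- Let N ≥ 1 and let U and U' be N×N complex unitary matrices. Then |⟨U·φ, U'·φ⟩|² = 1 holds for every unit vector φ ∈ ℂ^N if and only if there exists c ∈ ℂ with |c| = 1 such that U' = c • U. -/
open scoped InnerProductSpace

theorem norm_unitary_mulVec_aux {N : ℕ} (U : Matrix (Fin N) (Fin N) ℂ)
    (hU : U ∈ Matrix.unitaryGroup (Fin N) ℂ) (v : Fin N → ℂ) :
    ‖(WithLp.toLp 2 (U.mulVec v) : EuclideanSpace ℂ (Fin N))‖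
      = ‖(WithLp.toLp 2 v : EuclideanSpace ℂ (Fin N))‖ := by
  have h1 : star U * U = 1 := Matrix.mem_unitaryGroup_iff'.1 hU
  have h2 : inner ℂ (WithLp.toLp 2 (U.mulVec v) : EuclideanSpace ℂ (Fin N))
      (WithLp.toLp 2 (U.mulVec v))
      = inner ℂ (WithLp.toLp 2 v : EuclideanSpace ℂ (Fin N)) (WithLp.toLp 2 v) := by
    rw [EuclideanSpace.inner_toLp_toLp, EuclideanSpace.inner_toLp_toLp, Matrix.star_mulVec,
      dotProduct_comm, ← Matrix.dotProduct_mulVec, Matrix.mulVec_mulVec,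
      ← Matrix.star_eq_conjTranspose, h1, Matrix.one_mulVec, dotProduct_comm]
  rw [inner_self_eq_norm_sq_to_K, inner_self_eq_norm_sq_to_K] at h2
  have h3 : ‖(WithLp.toLp 2 (U.mulVec v) : EuclideanSpace ℂ (Fin N))‖ ^ 2
      = ‖(WithLp.toLp 2 v : EuclideanSpace ℂ (Fin N))‖ ^ 2 := by exact_mod_cast h2
  exact (sq_eq_sq₀ (norm_nonneg _) (norm_nonneg _)).1 h3

/-- Soundness and completeness of the equivalence-checking framework: for
unitaries `U, U'`, the fidelity `|⟨Uφ, U'φ⟩|²` equals `1` on every unit vector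
`φ` iff `U'` is a unimodular scalar multiple of `U` (equivalence up to a global
phase). -/
theorem fidelity_one_iff_global_phase
    (N : ℕ) (hN : 1 ≤ N) (U U' : Matrix (Fin N) (Fin N) ℂ)
    (hU : U ∈ Matrix.unitaryGroup (Fin N) ℂ)
    (hU' : U' ∈ Matrix.unitaryGroup (Fin N) ℂ) :
    (∀ φ : EuclideanSpace ℂ (Fin N), ‖φ‖ = 1 →
        ‖(inner (𝕜 := ℂ) (E := EuclideanSpace ℂ (Fin N))
            (WithLp.toLp 2 (U.mulVec φ)) (WithLp.toLp 2 (U'.mulVec φ)) : ℂ)‖ ^ 2 = 1) ↔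
      ∃ c : ℂ, ‖c‖ = 1 ∧ U' = c • U := by
  have nU := norm_unitary_mulVec_aux U hU
  have nU' := norm_unitary_mulVec_aux U' hU'
  have h1 : star U * U = 1 := Matrix.mem_unitaryGroup_iff'.1 hU
  have h2 : U * star U = 1 := Matrix.mem_unitaryGroup_iff.1 hU
  constructor
  · intro h
    have key : ∀ φ : EuclideanSpace ℂ (Fin N), ‖φ‖ = 1 →
        ∃ r : ℂ, U'.mulVec φ = r • U.mulVec φ := by
      intro φ hφ
      have a1 : ‖(WithLp.toLp 2 (U.mulVec φ) : EuclideanSpace ℂ (Fin N))‖ = 1 := by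
        rw [nU]; exact hφ
      have a2 : ‖(WithLp.toLp 2 (U'.mulVec φ) : EuclideanSpace ℂ (Fin N))‖ = 1 := by
        rw [nU']; exact hφ
      have a3 := (pow_eq_one_iff_of_nonneg (norm_nonneg _) two_ne_zero).1 (h φ hφ)
      have b1 : (WithLp.toLp 2 (U.mulVec φ) : EuclideanSpace ℂ (Fin N)) ≠ 0 := by
        intro h0; rw [h0] at a1; simp at a1
      have b2 : (WithLp.toLp 2 (U'.mulVec φ) : EuclideanSpace ℂ (Fin N)) ≠ 0 := by
        intro h0; rw [h0] at a2; simp at a2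
      obtain ⟨r, -, hr⟩ := (norm_inner_eq_norm_iff (𝕜 := ℂ) b1 b2).1 (by rw [a3, a1, a2, one_mul])
      exact ⟨r, congrArg WithLp.ofLp hr⟩
    have key2 : ∀ v : Fin N → ℂ, ∃ r : ℂ, U'.mulVec v = r • U.mulVec v := by
      intro v
      by_cases hv : v = 0
      · exact ⟨0, by simp [hv]⟩
      have hn : ‖(WithLp.toLp 2 v : EuclideanSpace ℂ (Fin N))‖ ≠ 0 := by simpa using hv
      set n := ‖(WithLp.toLp 2 v : EuclideanSpace ℂ (Fin N))‖ with hndef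
      have hnc : (n : ℂ)⁻¹ ≠ 0 := inv_ne_zero (by exact_mod_cast hn)
      obtain ⟨r, hr⟩ := key ((n : ℂ)⁻¹ • WithLp.toLp 2 v) (by
        rw [norm_smul, ← hndef, norm_inv, Complex.norm_real, hndef, norm_norm, ← hndef,
          inv_mul_cancel₀ hn])
      refine ⟨r, ?_⟩
      rw [WithLp.ofLp_smul, Matrix.mulVec_smul, Matrix.mulVec_smul, smul_comm r] at hr
      exact smul_right_injective _ hnc hr
    obtain ⟨c, hc⟩ := LinearMap.exists_eq_smul_id_of_forall_notLinearIndependent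
      (f := Matrix.toLin' (star U * U')) (by
        intro v hli
        obtain ⟨r, hr⟩ := key2 v
        have e : Matrix.toLin' (star U * U') v = r • v := by
          rw [Matrix.toLin'_apply, ← Matrix.mulVec_mulVec, hr, Matrix.mulVec_smul,
            Matrix.mulVec_mulVec, h1, Matrix.one_mulVec]
        rw [LinearIndependent.pair_iff] at hli
        have := (hli r (-1) (by rw [e]; simp)).2
        simp at this)
    have hUU : U' = c • U := by
      have e : star U * U' = c • (1 : Matrix (Fin N) (Fin N) ℂ) := by
        apply Matrix.toLin'.injective
        rw [hc, map_smul, Matrix.toLin'_one]; rfl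
      calc U' = U * (star U * U') := by rw [← mul_assoc, h2, one_mul]
        _ = c • U := by rw [e, mul_smul_comm, mul_one]
    refine ⟨c, ?_, hUU⟩
    let φ : EuclideanSpace ℂ (Fin N) := EuclideanSpace.single ⟨0, hN⟩ 1
    have hφ : ‖φ‖ = 1 := by simp [φ]
    have e1 := nU φ
    have e2 := nU' φ
    rw [hUU, Matrix.smul_mulVec, WithLp.toLp_smul, norm_smul, e1] at e2
    change ‖c‖ * ‖φ‖ = ‖φ‖ at e2
    simpa [hφ] using e2
  · rintro ⟨c, hc, rfl⟩ φ hφ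
    have e1 : ‖(WithLp.toLp 2 (U.mulVec φ) : EuclideanSpace ℂ (Fin N))‖ = 1 := by
      rw [nU]; exact hφ
    rw [Matrix.smul_mulVec, WithLp.toLp_smul, inner_smul_right, norm_mul, hc,
      inner_self_eq_norm_sq_to_K, e1]
    simp
end

section
/- Let N ≥ 1, let T be a subset of {0, …, N−1}, and let D be an N×N complex unitary matrix such that D·e_j = e_j for every standard basis vector e_j with j ∉ T. Then for every unit vector φ ∈ ℂ^N, the failure probability satisfies 1 − |⟨φ, D·φ⟩|² ≤ 4 · Σ_{j ∈ T} |φ_j|², where ⟨·,·⟩ is the standard Hermitian inner product on ℂ^N. -/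
open scoped InnerProductSpace

lemma unitary_toLp_norm {N : ℕ} (D : Matrix (Fin N) (Fin N) ℂ)
    (hU : D ∈ Matrix.unitaryGroup (Fin N) ℂ) (x : Fin N → ℂ) :
    ‖(WithLp.toLp 2 (D.mulVec x) : EuclideanSpace ℂ (Fin N))‖
      = ‖(WithLp.toLp 2 x : EuclideanSpace ℂ (Fin N))‖ := by
  have h : (⟪(WithLp.toLp 2 (D.mulVec x) : EuclideanSpace ℂ (Fin N)),
      WithLp.toLp 2 (D.mulVec x)⟫_ℂ : ℂ)
      = ⟪(WithLp.toLp 2 x : EuclideanSpace ℂ (Fin N)), WithLp.toLp 2 x⟫_ℂ := by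
    rw [EuclideanSpace.inner_eq_star_dotProduct, EuclideanSpace.inner_eq_star_dotProduct]
    have hD : D.conjTranspose * D = 1 := Matrix.mem_unitaryGroup_iff'.mp hU
    simp only
    rw [dotProduct_comm, Matrix.star_mulVec, Matrix.dotProduct_mulVec, Matrix.vecMul_vecMul, hD,
      Matrix.vecMul_one, dotProduct_comm]
  rw [inner_self_eq_norm_sq_to_K, inner_self_eq_norm_sq_to_K] at h
  have h2 := (by exact_mod_cast h :
    ‖(WithLp.toLp 2 (D.mulVec x) : EuclideanSpace ℂ (Fin N))‖ ^ 2
      = ‖(WithLp.toLp 2 x : EuclideanSpace ℂ (Fin N))‖ ^ 2)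
  exact (sq_eq_sq₀ (norm_nonneg _) (norm_nonneg _)).mp h2

/-- Worst-case detection bound: if a unitary `D` fixes every standard basis
vector `e j` with `j ∉ T`, then for every unit state `φ` the failure
probability `1 − |⟨φ, D φ⟩|²` is at most `4 · ∑_{j ∈ T} |φ j|²`. -/
theorem pFailure_le_four_mul_mass_on_support
    (N : ℕ) (hN : 1 ≤ N) (T : Finset (Fin N))
    (D : Matrix (Fin N) (Fin N) ℂ)
    (hU : D ∈ Matrix.unitaryGroup (Fin N) ℂ)
    (hfix : ∀ j : Fin N, j ∉ T →
      D.mulVec (EuclideanSpace.single j (1 : ℂ)) = EuclideanSpace.single j 1) :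
    ∀ φ : EuclideanSpace ℂ (Fin N), ‖φ‖ = 1 →
      1 - ‖(⟪φ, (WithLp.toLp 2 (D.mulVec φ) : EuclideanSpace ℂ (Fin N))⟫_ℂ : ℂ)‖ ^ 2 ≤
        4 * ∑ j ∈ T, ‖φ j‖ ^ 2 := by
  intro φ hφ
  have hcol : ∀ i j, j ∉ T → D i j = (1 : Matrix (Fin N) (Fin N) ℂ) i j := by
    intro i j hj
    have := congrFun (hfix j hj) i
    simpa [Matrix.mulVec, dotProduct, Matrix.one_apply, Pi.single_apply] using this
  let b : Fin N → ℂ := fun j => if j ∈ T then φ j else 0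
  have hdiff : φ - (WithLp.toLp 2 (D.mulVec φ) : EuclideanSpace ℂ (Fin N))
      = (WithLp.toLp 2 b : EuclideanSpace ℂ (Fin N)) - WithLp.toLp 2 (D.mulVec b) := by
    have hv : (φ : Fin N → ℂ) - b = D.mulVec φ - D.mulVec b := by
      rw [← Matrix.mulVec_sub]
      conv_lhs => rw [← Matrix.one_mulVec ((φ : Fin N → ℂ) - b)]
      funext i
      simp only [Matrix.mulVec, dotProduct]
      refine Finset.sum_congr rfl fun j _ => ?_
      by_cases hj : j ∈ T
      · simp [b, hj]
      · rw [hcol i j hj]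
    ext i
    have := congrFun hv i
    simp only [Pi.sub_apply, PiLp.sub_apply] at this ⊢
    linear_combination this
  have hb : ‖(WithLp.toLp 2 b : EuclideanSpace ℂ (Fin N))‖ ^ 2 = ∑ j ∈ T, ‖φ j‖ ^ 2 := by
    rw [EuclideanSpace.norm_sq_eq, ← Finset.sum_subset (Finset.subset_univ T)]
    · exact Finset.sum_congr rfl fun j hj => by simp [b, hj]
    · intro j _ hj
      simp [b, hj]
  have hDφ := unitary_toLp_norm D hU φ
  have hφ' : ‖(WithLp.toLp 2 (φ : Fin N → ℂ) : EuclideanSpace ℂ (Fin N))‖ = 1 := hφ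
  rw [hφ'] at hDφ
  have hDb := unitary_toLp_norm D hU b
  have hle := norm_sub_le (WithLp.toLp 2 b : EuclideanSpace ℂ (Fin N)) (WithLp.toLp 2 (D.mulVec b))
  rw [← hdiff, hDb] at hle
  have hexp := norm_sub_sq (𝕜 := ℂ) φ (WithLp.toLp 2 (D.mulVec φ) : EuclideanSpace ℂ (Fin N))
  rw [hφ, hDφ] at hexp
  rw [← hb]
  have hre := Complex.abs_re_le_norm
    (⟪φ, (WithLp.toLp 2 (D.mulVec φ) : EuclideanSpace ℂ (Fin N))⟫_ℂ : ℂ)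
  have hre2 := pow_le_pow_left₀ (abs_nonneg _) hre 2
  rw [sq_abs] at hre2
  have hle2 := pow_le_pow_left₀ (norm_nonneg _) hle 2
  simp only [RCLike.re_to_complex] at hexp
  nlinarith [sq_nonneg (1 - (⟪φ, (WithLp.toLp 2 (D.mulVec φ) : EuclideanSpace ℂ (Fin N))⟫_ℂ : ℂ).re)]
end
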